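/- Let η, ε : F ⊣ U : B → A be an adjunction, T = (UF, η, UεF) the induced monad on A, F^T ⊣ U^T : A^T → A the free–forgetful adjunction for T, and a₀ an object of A. For any monomorphism i_a : a → UF(a₀) = U^T F^T(a₀), the morphism ξ^F_{i_a} = ε_{F(a₀)} ∘ F(i_a) : F(a) → F(a₀) is an isomorphism if and only if the morphism ξ^{F^T}_{i_a} = ε^T_{F^T(a₀)} ∘ F^T(i_a) : F^T(a) → F^T(a₀) is an isomorphism. -/

import Mathlib

open CategoryTheory

/-!
The comparison functor `K : B ⥤ A^T` satisfies `K F = F^T` and `U^T K = U`, and it sends `ξ^F` to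
`ξ^{F^T}`. As `U^T` reflects isomorphisms, it remains to see that `U` reflects those between
objects of the form `F x`. Their counit components are split epimorphisms, by the triangle
identity. If `s` is a section of `ε_Y` and `f : X ⟶ Y` has `U f` invertible, then
`g = s ≫ F (U f)⁻¹ ≫ ε_X` is a section of `f`; hence `U g = (U f)⁻¹`, so `ε_X ≫ f ≫ g = ε_X` by
naturality, and `f ≫ g = 𝟙` because `ε_X` is epi.
-/

section

variable {A : Type*} {B : Type*} [Category A] [Category B] {F : A ⥤ B} {U : B ⥤ A}

instance isSplitEpi_counit_app_obj (adj : F ⊣ U) (x : A) :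
    IsSplitEpi (adj.counit.app (F.obj x)) :=
  ⟨⟨F.map (adj.unit.app x), adj.left_triangle_components x⟩⟩

theorem isIso_of_isIso_map_of_isSplitEpi_counit (adj : F ⊣ U) {X Y : B} (f : X ⟶ Y)
    [Epi (adj.counit.app X)] [IsSplitEpi (adj.counit.app Y)] [IsIso (U.map f)] : IsIso f := by
  let g : Y ⟶ X := section_ (adj.counit.app Y) ≫ F.map (inv (U.map f)) ≫ adj.counit.app X
  have g_comp_f : g ≫ f = 𝟙 Y := by
    simp only [g, Category.assoc, ← adj.counit_naturality, ← F.map_comp_assoc,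
      IsIso.inv_hom_id, F.map_id, Category.id_comp, IsSplitEpi.id]
  have map_f_comp_g : U.map (f ≫ g) = 𝟙 (U.obj X) := by
    rw [← cancel_mono (U.map f), ← U.map_comp, Category.assoc, g_comp_f, Category.comp_id,
      Category.id_comp]
  have f_comp_g : f ≫ g = 𝟙 X := by
    rw [← cancel_epi (adj.counit.app X)]
    calc adj.counit.app X ≫ f ≫ g = F.map (U.map (f ≫ g)) ≫ adj.counit.app X :=
          (adj.counit_naturality (f ≫ g)).symm
      _ = adj.counit.app X ≫ 𝟙 X := by
          rw [map_f_comp_g, F.map_id, Category.id_comp]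
          exact (Category.comp_id _).symm
  exact ⟨g, f_comp_g, g_comp_f⟩

theorem isIso_comparison_map_iff (adj : F ⊣ U) {X Y : B} (f : X ⟶ Y)
    [Epi (adj.counit.app X)] [IsSplitEpi (adj.counit.app Y)] :
    IsIso ((Monad.comparison adj).map f) ↔ IsIso f := by
  refine ⟨fun _ ↦ ?_, fun _ ↦ inferInstance⟩
  have : IsIso (U.map f) :=
    inferInstanceAs (IsIso (adj.toMonad.forget.map ((Monad.comparison adj).map f)))
  exact isIso_of_isIso_map_of_isSplitEpi_counit adj f

theorem comparison_map_map_comp_counit (adj : F ⊣ U) {x : A} {Y : B} (i : x ⟶ U.obj Y) :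
    (Monad.comparison adj).map (F.map i ≫ adj.counit.app Y) =
      adj.toMonad.free.map i ≫
        adj.toMonad.adj.counit.app ((Monad.comparison adj).obj Y) := by
  ext
  rw [Monad.adj_counit]
  exact U.map_comp (F.map i) (adj.counit.app Y)

theorem stmt_2_general (adj : F ⊣ U) (a₀ : A) {x : A} (i : x ⟶ U.obj (F.obj a₀)) :
    IsIso (F.map i ≫ adj.counit.app (F.obj a₀)) ↔
      IsIso (adj.toMonad.free.map i ≫
        adj.toMonad.adj.counit.app (adj.toMonad.free.obj a₀)) := by
  calc
    _ ↔ IsIso ((Monad.comparison adj).map (F.map i ≫ adj.counit.app (F.obj a₀))) :=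
      (isIso_comparison_map_iff adj (Y := F.obj a₀) _).symm
    _ ↔ _ := by rw [comparison_map_map_comp_counit]; rfl

end

/-- Let `η, ε : F ⊣ U : B → A` be an adjunction, `T = (UF, η, UεF)` the
induced monad on `A`, `F^T ⊣ U^T : A^T → A` the free–forgetful adjunction for `T`, and
`a₀` an object of `A`.  For any monomorphism `i : x ⟶ UF(a₀) = U^T F^T(a₀)`, the morphism
`ξ^F_i = ε_{F(a₀)} ∘ F(i) : F(x) ⟶ F(a₀)` is an isomorphism if and only if the morphism
`ξ^{F^T}_i = ε^T_{F^T(a₀)} ∘ F^T(i) : F^T(x) ⟶ F^T(a₀)` is an isomorphism. -/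
theorem stmt_2 {A : Type*} {B : Type*} [Category A] [Category B]
    {F : A ⥤ B} {U : B ⥤ A} (adj : F ⊣ U) (a₀ : A) {x : A}
    (i : x ⟶ U.obj (F.obj a₀)) [Mono i] :
    IsIso (F.map i ≫ adj.counit.app (F.obj a₀)) ↔
      IsIso (adj.toMonad.free.map i ≫
        adj.toMonad.adj.counit.app (adj.toMonad.free.obj a₀)) :=
  stmt_2_general adj a₀ i
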